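/- Let C be a pointed coalgebra over an algebraically closed field whose Ext-quiver contains a subquiver Q′ such that there exists a quotient-quiver homomorphism q : Q → Q′ from some finite bipartite quiver Q whose underlying graph is not a disjoint union of Dynkin diagrams. Then C is not of discrete corepresentation type. -/

import Mathlib

open TensorProduct



section Basic

variable (K : Type) [CommRing K] (H : Type) [AddCommGroup H] [Module K H] [Coalgebra K H]

/-- A grouplike element of a coalgebra. -/
def IsGrouplike (g : H) : Prop :=
  Coalgebra.counit (R := K) g = 1 ∧ Coalgebra.comul (R := K) g = g ⊗ₜ[K] g

/-- The space `P(g,h)` of `(g,h)`-skew primitive elements. -/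
noncomputable def skewPrim (g h : H) : Submodule K H :=
  LinearMap.ker (Coalgebra.comul (R := K) (A := H)
    - (TensorProduct.mk K H H g + (TensorProduct.mk K H H).flip h))

lemma mem_skewPrim {g h x : H} :
    x ∈ skewPrim K H g h ↔ Coalgebra.comul (R := K) x = g ⊗ₜ[K] x + x ⊗ₜ[K] h := by
  rw [skewPrim, LinearMap.mem_ker, LinearMap.sub_apply, sub_eq_zero, LinearMap.add_apply]
  rfl

/-- A submodule which is a subcoalgebra. -/
def IsSubcoalgebra (D : Submodule K H) : Prop :=
  ∀ x ∈ D, Coalgebra.comul (R := K) x ∈ LinearMap.range (TensorProduct.map D.subtype D.subtype)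

/-- A coalgebra is pointed if every simple subcoalgebra is one-dimensional. -/
def IsPointedCoalgebra : Prop :=
  ∀ D : Submodule K H, IsSubcoalgebra K H D → D ≠ ⊥ →
    (∀ D' : Submodule K H, IsSubcoalgebra K H D' → D' ≤ D → D' = ⊥ ∨ D' = D) →
    Module.finrank K ↥D = 1

end Basic

section Comodules

variable (K : Type) [CommRing K] (H : Type) [AddCommGroup H] [Module K H] [Coalgebra K H]

/-- A (finite or infinite dimensional) right `H`-comodule. -/
structure Comod where
  carrier : Type
  [acg : AddCommGroup carrier]
  [mod : Module K carrier]
  ρ : carrier →ₗ[K] carrier ⊗[K] H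
  counit_comp : ∀ m : carrier,
    (TensorProduct.rid K carrier)
      ((LinearMap.lTensor carrier (Coalgebra.counit (R := K) (A := H))) (ρ m)) = m
  coassoc : ∀ m : carrier,
    (LinearMap.lTensor carrier (Coalgebra.comul (R := K) (A := H))) (ρ m)
      = (TensorProduct.assoc K carrier H H) ((LinearMap.rTensor H ρ) (ρ m))

attribute [instance] Comod.acg Comod.mod

/-- A morphism of right `H`-comodules. -/
structure ComodHom (M N : Comod K H) where
  toLin : M.carrier →ₗ[K] N.carrier
  compat : ∀ m : M.carrier, N.ρ (toLin m) = (LinearMap.rTensor H toLin) (M.ρ m)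

/-- Isomorphism of comodules. -/
def ComodIso (M N : Comod K H) : Prop :=
  ∃ f : ComodHom K H M N, Function.Bijective f.toLin

/-- An indecomposable comodule: it is nonzero, and (equivalently to the usual definition,
since idempotents split in comodule categories) every idempotent endomorphism is `0` or `1`. -/
def Comod.Indec (M : Comod K H) : Prop :=
  (∃ m : M.carrier, m ≠ 0) ∧
    ∀ f : ComodHom K H M M, f.toLin ∘ₗ f.toLin = f.toLin →
      f.toLin = 0 ∨ f.toLin = LinearMap.id

/-- A submodule of a comodule which is a subcomodule. -/
def IsSubcomod (M : Comod K H) (N : Submodule K M.carrier) : Prop :=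
  ∀ m ∈ N, M.ρ m ∈ LinearMap.range (LinearMap.rTensor H N.subtype)

/-- The coaction of `M` factors through the subcoalgebra `D`, i.e. `M` is a `D`-comodule. -/
def CoactsThrough (M : Comod K H) (D : Submodule K H) : Prop :=
  ∀ m : M.carrier, M.ρ m ∈ LinearMap.range (LinearMap.lTensor M.carrier D.subtype)

/-- `M` has dimension vector `d` : it admits a composition series whose successive quotients
are the one-dimensional comodules associated to grouplike elements, where for every `h` the
grouplike `h` occurs exactly `d h` times. -/
def HasDimVector (M : Comod K H) (d : H → ℕ) : Prop :=
  ∃ (k : ℕ) (F : Fin (k+1) → Submodule K M.carrier) (g : Fin k → H),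
    F 0 = ⊥ ∧ F (Fin.last k) = ⊤ ∧
    (∀ i : Fin k, F i.castSucc ≤ F i.succ) ∧
    (∀ i : Fin (k+1), IsSubcomod K H M (F i)) ∧
    (∀ i : Fin k, IsGrouplike K H (g i)) ∧
    (∀ i : Fin k, ∃ m : M.carrier, m ∈ F i.succ ∧ m ∉ F i.castSucc ∧
        F i.succ = F i.castSucc ⊔ Submodule.span K {m}) ∧
    (∀ i : Fin k, ∀ m ∈ F i.succ,
        M.ρ m - m ⊗ₜ[K] (g i) ∈ LinearMap.range (LinearMap.rTensor H (F i.castSucc).subtype)) ∧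
    (∀ h : H, d h = Nat.card {i : Fin k // g i = h})

/-- A pointed coalgebra is of discrete corepresentation type if for every dimension vector `d`
there are only finitely many isomorphism classes of indecomposable comodules with
dimension vector `d`. -/
def DiscreteCorepType : Prop :=
  ∀ d : H → ℕ, ∃ (N : ℕ) (R : Fin N → Comod K H),
    ∀ M : Comod K H, M.Indec K H → HasDimVector K H M d → ∃ i, ComodIso K H M (R i)

/-- A subcoalgebra `D ≤ H` is of finite corepresentation type: there are only finitely many
isomorphism classes of finite-dimensional indecomposable comodules whose coaction factors
through `D`. -/
def FinCorepTypeOn (D : Submodule K H) : Prop :=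
  ∃ (N : ℕ) (R : Fin N → Comod K H),
    ∀ M : Comod K H, M.Indec K H → Module.Finite K M.carrier → CoactsThrough K H M D →
      ∃ i, ComodIso K H M (R i)

/-- A coalgebra is of finite corepresentation type. -/
def FinCorepType : Prop := FinCorepTypeOn K H ⊤

end Comodules

/-!
A representation of a quiver `Q` without paths of length two becomes a right comodule by letting
each vertex act through its grouplike element and each arrow through its skew primitive element;
gluing vertices of `Q` only identifies some of the grouplikes. Functionals dual to the skew
primitives recover the arrows from the coaction, so a comodule morphism commutes with the arrows
on the total spaces, although it may mix vertices with the same grouplike. For a nonsimple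
indecomposable representation every vertex has jointly injective outgoing or jointly surjective
incoming arrows. Composites of such morphisms are then computed on diagonal blocks alone, so
indecomposability and nonisomorphism pass to comodules. The dimension vector of the comodule
depends only on that of the representation, so in discrete corepresentation type there are, by
Krull-Schmidt, finitely many isomorphism classes of representations of each dimension vector.

This is impossible when `∑ v, d v ^ 2 ≤ ∑ e, d (s e) * d (t e)`. Otherwise, the orbits of finitely
many representations would cover the representation space, and the cone over it would be covered by
the images of finitely many polynomial maps in `∑ v, d v ^ 2` variables; but it has one dimension
more than the representation space, so it lies in no such finite union over an infinite field.
-/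

section Comodule

variable {K : Type} [CommRing K] {C : Type} [AddCommGroup C] [Module K C] [Coalgebra K C]

theorem counit_eq_zero_of_mem_skewPrim {g h x : C} (hg : IsGrouplike K C g)
    (hh : IsGrouplike K C h) (hx : x ∈ skewPrim K C g h) :
    Coalgebra.counit (R := K) x = 0 := by
  have hsmul : Coalgebra.counit (R := K) x • h = 0 := by
    have hx' := congrArg (TensorProduct.lid K C) (Coalgebra.rTensor_counit_comul (R := K) x)
    rw [(mem_skewPrim K C).mp hx] at hx'
    simpa [hg.1] using hx'
  simpa [hh.1] using congrArg (Coalgebra.counit (R := K)) hsmul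

theorem ComodIso.symm {M N : Comod K C} (h : ComodIso K C M N) : ComodIso K C N M := by
  obtain ⟨f, hf⟩ := h
  let P := LinearEquiv.ofBijective f.toLin hf
  refine ⟨⟨P.symm, fun n => ?_⟩, P.symm.bijective⟩
  obtain ⟨m, rfl⟩ := P.surjective n
  calc M.ρ (P.symm (P m)) = M.ρ m := by rw [P.symm_apply_apply]
    _ = LinearMap.rTensor C P.symm.toLinearMap (LinearMap.rTensor C P.toLinearMap (M.ρ m)) := by
        rw [← LinearMap.rTensor_comp_apply, LinearEquiv.symm_comp, LinearMap.rTensor_id_apply]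
    _ = LinearMap.rTensor C P.symm.toLinearMap (N.ρ (P m)) := congrArg _ (f.compat m).symm

theorem ComodIso.trans {M N L : Comod K C} (h : ComodIso K C M N) (h' : ComodIso K C N L) :
    ComodIso K C M L := by
  obtain ⟨f, hf⟩ := h
  obtain ⟨f', hf'⟩ := h'
  refine ⟨⟨f'.toLin ∘ₗ f.toLin, fun m => ?_⟩, hf'.comp hf⟩
  rw [LinearMap.comp_apply, f'.compat, f.compat, LinearMap.rTensor_comp_apply]

end Comodule

section DimVector

variable {K : Type} [CommRing K] {C : Type} [AddCommGroup C] [Module K C]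

theorem tmul_mem_range_rTensor_subtype {M : Type*} [AddCommGroup M] [Module K M]
    {N : Submodule K M} {m : M} (hm : m ∈ N) (c : C) :
    m ⊗ₜ c ∈ LinearMap.range (LinearMap.rTensor C N.subtype) :=
  ⟨⟨m, hm⟩ ⊗ₜ c, rfl⟩

theorem range_rTensor_subtype_mono {M : Type*} [AddCommGroup M] [Module K M]
    {N N' : Submodule K M} (h : N ≤ N') :
    LinearMap.range (LinearMap.rTensor C N.subtype) ≤
      LinearMap.range (LinearMap.rTensor C N'.subtype) := by
  rw [← Submodule.subtype_comp_inclusion N N' h, LinearMap.rTensor_comp]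
  exact LinearMap.range_comp_le_range _ _

variable [Coalgebra K C] {M : Comod K C}

theorem isSubcomod_flag {k : ℕ} (b : Module.Basis (Fin k) K M.carrier) {γ : Fin k → C}
    (hρ : ∀ j, M.ρ (b j) - b j ⊗ₜ γ j ∈
      LinearMap.range (LinearMap.rTensor C (b.flag j.castSucc).subtype)) (i : Fin (k + 1)) :
    IsSubcomod K C M (b.flag i) := by
  suffices b.flag i ≤
      (LinearMap.range (LinearMap.rTensor C (b.flag i).subtype)).comap M.ρ from fun m hm => this hm
  refine Submodule.span_le.mpr ?_
  rintro _ ⟨j, hj, rfl⟩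
  rw [SetLike.mem_coe, Submodule.mem_comap, ← sub_add_cancel (M.ρ (b j)) (b j ⊗ₜ γ j)]
  exact add_mem (range_rTensor_subtype_mono (b.flag_mono (le_of_lt hj)) (hρ j))
    (tmul_mem_range_rTensor_subtype (b.self_mem_flag hj) _)

theorem hasDimVector_of_flag [Nontrivial K] {k : ℕ} (b : Module.Basis (Fin k) K M.carrier)
    {γ : Fin k → C} (hγ : ∀ j, IsGrouplike K C (γ j))
    (hρ : ∀ j, M.ρ (b j) - b j ⊗ₜ γ j ∈
      LinearMap.range (LinearMap.rTensor C (b.flag j.castSucc).subtype)) :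
    HasDimVector K C M fun h => Nat.card {j // γ j = h} := by
  refine ⟨k, b.flag, γ, b.flag_zero, b.flag_last,
    fun j => b.flag_mono j.castSucc_lt_succ.le, isSubcomod_flag b hρ, hγ, fun j => ?_,
    fun j => ?_, fun _ => rfl⟩
  · exact ⟨b j, b.self_mem_flag j.castSucc_lt_succ, by simp [b.self_mem_flag_iff],
      by rw [b.flag_succ, sup_comm]⟩
  · suffices b.flag j.succ ≤
        (LinearMap.range (LinearMap.rTensor C (b.flag j.castSucc).subtype)).comap
          (M.ρ - (TensorProduct.mk K M.carrier C).flip (γ j)) from fun m hm => this hm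
    rw [b.flag_succ]
    refine sup_le ((Submodule.span_singleton_le_iff_mem _ _).mpr (hρ j)) fun m hm => ?_
    exact sub_mem (isSubcomod_flag b hρ j.castSucc m hm) (tmul_mem_range_rTensor_subtype hm _)

theorem hasDimVector_of_basis [Nontrivial K] {ι : Type*} [Finite ι]
    (b : Module.Basis ι K M.carrier) (r : ι → ℕ) {γ : ι → C} (hγ : ∀ i, IsGrouplike K C (γ i))
    (hρ : ∀ i, M.ρ (b i) - b i ⊗ₜ γ i ∈
      LinearMap.range (LinearMap.rTensor C (Submodule.span K (b '' {j | r j < r i})).subtype)) :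
    HasDimVector K C M fun h => Nat.card {i // γ i = h} := by
  have := Fintype.ofFinite ι
  let e := Fintype.equivFin ι
  let σ : Fin (Fintype.card ι) ≃ ι := (Tuple.sort (r ∘ e.symm)).trans e.symm
  have hσ : Monotone (r ∘ σ) := Tuple.monotone_sort (r ∘ e.symm)
  have hflag (a : Fin (Fintype.card ι)) :
      Submodule.span K (b '' {j | r j < r (σ a)}) ≤ (b.reindex σ.symm).flag a.castSucc := by
    refine Submodule.span_le.mpr ?_
    rintro _ ⟨j, hj, rfl⟩
    obtain ⟨a', rfl⟩ := σ.surjective j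
    have hmem := (b.reindex σ.symm).self_mem_flag
      (Fin.castSucc_lt_castSucc_iff.mpr (hσ.reflect_lt hj))
    simpa using hmem
  have hdim := hasDimVector_of_flag (b.reindex σ.symm) (fun a => hγ (σ a)) fun a => by
    simpa using range_rTensor_subtype_mono (hflag a) (hρ (σ a))
  convert hdim using 2 with h
  exact (Nat.card_congr (σ.subtypeEquiv fun _ => Iff.rfl)).symm

end DimVector

theorem finite_image_mk_of_subset_iUnion {α ι : Type*} [Finite ι] (r : Setoid α) {S : Set α}
    (T : ι → Set α) (hT : ∀ i, ∀ a ∈ T i, ∀ b ∈ T i, r a b) (hS : S ⊆ ⋃ i, T i) :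
    (Quotient.mk r '' S).Finite := by
  refine (Set.finite_iUnion fun i => ?_).subset
    ((Set.image_mono hS).trans (Set.image_iUnion (f := Quotient.mk r)).subset)
  refine Set.Subsingleton.finite ?_
  rintro _ ⟨a, ha, rfl⟩ _ ⟨b, hb, rfl⟩
  exact Quotient.sound (hT i a ha b hb)

/-- Representations over `K` of the quiver with arrows `e : s e ⟶ t e`, on a fixed family `W` of
modules. -/
@[ext]
structure QuiverRep (K : Type*) [CommRing K] {V A : Type*} (s t : A → V) (W : V → Type*)
    [∀ v, AddCommGroup (W v)] [∀ v, Module K (W v)] where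
  map : ∀ e, W (s e) →ₗ[K] W (t e)

namespace QuiverRep

section Basic

variable {K : Type*} [CommRing K] {V A : Type*} {s t : A → V}
  {W : V → Type*} [∀ v, AddCommGroup (W v)] [∀ v, Module K (W v)]
  {W₁ : V → Type*} [∀ v, AddCommGroup (W₁ v)] [∀ v, Module K (W₁ v)]
  {W₂ : V → Type*} [∀ v, AddCommGroup (W₂ v)] [∀ v, Module K (W₂ v)]
  {W₃ : V → Type*} [∀ v, AddCommGroup (W₃ v)] [∀ v, Module K (W₃ v)]

/-- `f` is a morphism of representations from `φ` to `ψ`. -/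
def IsHom (φ : QuiverRep K s t W₁) (ψ : QuiverRep K s t W₂) (f : ∀ v, W₁ v →ₗ[K] W₂ v) : Prop :=
  ∀ e, f (t e) ∘ₗ φ.map e = ψ.map e ∘ₗ f (s e)

/-- Isomorphism of representations. -/
def Iso (φ : QuiverRep K s t W₁) (ψ : QuiverRep K s t W₂) : Prop :=
  ∃ P : ∀ v, W₁ v ≃ₗ[K] W₂ v, φ.IsHom ψ fun v => (P v).toLinearMap

theorem Iso.refl (φ : QuiverRep K s t W) : φ.Iso φ :=
  ⟨fun v => .refl K (W v), fun _ => rfl⟩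

theorem Iso.symm {φ : QuiverRep K s t W₁} {ψ : QuiverRep K s t W₂} (h : φ.Iso ψ) : ψ.Iso φ := by
  obtain ⟨P, hP⟩ := h
  refine ⟨fun v => (P v).symm, fun e => LinearMap.ext fun w => ?_⟩
  have key := LinearMap.congr_fun (hP e) ((P (s e)).symm w)
  simp only [LinearMap.comp_apply, LinearEquiv.coe_coe, LinearEquiv.apply_symm_apply] at key ⊢
  rw [← key, LinearEquiv.symm_apply_apply]

theorem Iso.trans {φ : QuiverRep K s t W₁} {ψ : QuiverRep K s t W₂} {χ : QuiverRep K s t W₃}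
    (h : φ.Iso ψ) (h' : ψ.Iso χ) : φ.Iso χ := by
  obtain ⟨P, hP⟩ := h
  obtain ⟨Q, hQ⟩ := h'
  refine ⟨fun v => (P v).trans (Q v), fun e => LinearMap.ext fun w => ?_⟩
  have hPw := LinearMap.congr_fun (hP e) w
  have hQw := LinearMap.congr_fun (hQ e) (P (s e) w)
  simp only [LinearMap.comp_apply, LinearEquiv.coe_coe, LinearEquiv.trans_apply] at hPw hQw ⊢
  rw [hPw, hQw]

variable (K s t W) in
/-- The setoid whose quotient is the set of isomorphism classes of representations on `W`. -/
def isoSetoid : Setoid (QuiverRep K s t W) :=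
  ⟨Iso, Iso.refl, Iso.symm, Iso.trans⟩

theorem out_mk_iso (φ : QuiverRep K s t W) : (Quotient.mk (isoSetoid K s t W) φ).out.Iso φ :=
  Quotient.mk_out (s := isoSetoid K s t W) φ

/-- Transport of structure along linear equivalences. -/
@[simps]
def conj (φ : QuiverRep K s t W₁) (P : ∀ v, W₁ v ≃ₗ[K] W₂ v) : QuiverRep K s t W₂ where
  map e := (P (t e)).toLinearMap ∘ₗ φ.map e ∘ₗ (P (s e)).symm.toLinearMap

theorem iso_conj (φ : QuiverRep K s t W₁) (P : ∀ v, W₁ v ≃ₗ[K] W₂ v) : φ.Iso (φ.conj P) :=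
  ⟨P, fun e => LinearMap.ext fun w => by simp⟩

/-- The direct sum of two representations. -/
@[simps]
def prod (φ : QuiverRep K s t W₁) (ψ : QuiverRep K s t W₂) :
    QuiverRep K s t fun v => W₁ v × W₂ v where
  map e := (φ.map e).prodMap (ψ.map e)

theorem Iso.prod {W₄ : V → Type*} [∀ v, AddCommGroup (W₄ v)] [∀ v, Module K (W₄ v)]
    {φ : QuiverRep K s t W₁} {φ' : QuiverRep K s t W₂} {ψ : QuiverRep K s t W₃}
    {ψ' : QuiverRep K s t W₄} (h : φ.Iso φ') (h' : ψ.Iso ψ') :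
    (φ.prod ψ).Iso (φ'.prod ψ') := by
  obtain ⟨P, hP⟩ := h
  obtain ⟨Q, hQ⟩ := h'
  exact ⟨fun v => (P v).prodCongr (Q v), fun e => LinearMap.ext fun w =>
    Prod.ext (LinearMap.congr_fun (hP e) w.1) (LinearMap.congr_fun (hQ e) w.2)⟩

/-- The subrepresentation on a family of submodules stable under all arrows. -/
@[simps]
def restrict (φ : QuiverRep K s t W) (N : ∀ v, Submodule K (W v))
    (hN : ∀ e, ∀ w ∈ N (s e), φ.map e w ∈ N (t e)) : QuiverRep K s t fun v => N v where
  map e := (φ.map e).restrict (hN e)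

theorem iso_prod_restrict (φ : QuiverRep K s t W) {N N' : ∀ v, Submodule K (W v)}
    (hN : ∀ e, ∀ w ∈ N (s e), φ.map e w ∈ N (t e))
    (hN' : ∀ e, ∀ w ∈ N' (s e), φ.map e w ∈ N' (t e)) (hc : ∀ v, IsCompl (N v) (N' v)) :
    φ.Iso ((φ.restrict N hN).prod (φ.restrict N' hN')) :=
  Iso.symm ⟨fun v => (N v).prodEquivOfIsCompl (N' v) (hc v),
    fun e => LinearMap.ext fun w => by simp⟩

/-- Every idempotent endomorphism is `0` or `1`. The zero representation is allowed; all others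
with this property are the indecomposable ones. -/
def HasTrivialIdempotents (φ : QuiverRep K s t W) : Prop :=
  ∀ f : ∀ v, Module.End K (W v), φ.IsHom φ f → IsIdempotentElem f → f = 0 ∨ f = 1

theorem IsHom.map_mem_range {φ : QuiverRep K s t W₁} {ψ : QuiverRep K s t W₂}
    {f : ∀ v, W₁ v →ₗ[K] W₂ v} (hf : φ.IsHom ψ f) (e : A) :
    ∀ w ∈ LinearMap.range (f (s e)), ψ.map e w ∈ LinearMap.range (f (t e)) := by
  rintro _ ⟨u, rfl⟩
  exact ⟨φ.map e u, LinearMap.congr_fun (hf e) u⟩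

theorem IsHom.map_mem_ker {φ : QuiverRep K s t W₁} {ψ : QuiverRep K s t W₂}
    {f : ∀ v, W₁ v →ₗ[K] W₂ v} (hf : φ.IsHom ψ f) (e : A) :
    ∀ w ∈ LinearMap.ker (f (s e)), φ.map e w ∈ LinearMap.ker (f (t e)) := fun w hw => by
  have key := LinearMap.congr_fun (hf e) w
  simp only [LinearMap.comp_apply, LinearMap.mem_ker.mp hw, map_zero] at key
  exact LinearMap.mem_ker.mpr key

end Basic

section KrullSchmidt

variable {K : Type*} [Field K] {V A : Type*} {s t : A → V}

/-- The standard family of coordinate spaces with dimension vector `d`. -/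
abbrev coordSpace (K : Type*) (d : V → ℕ) (v : V) : Type _ := Fin (d v) → K

theorem exists_iso_coordSpace {W : V → Type*} [∀ v, AddCommGroup (W v)] [∀ v, Module K (W v)]
    [∀ v, Module.Finite K (W v)] (φ : QuiverRep K s t W) :
    ∃ ψ : QuiverRep K s t (coordSpace K fun v => Module.finrank K (W v)), φ.Iso ψ :=
  ⟨_, φ.iso_conj fun v => (Module.finBasis K (W v)).equivFun⟩

theorem finrank_submodule_lt {d : V → ℕ} {N : ∀ v, Submodule K (coordSpace K d v)}
    (hN : N ≠ ⊤) : (fun v => Module.finrank K (N v)) < d := by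
  have hle (v : V) : Module.finrank K (N v) ≤ d v := by
    simpa using (N v).finrank_le
  obtain ⟨v, hv⟩ := Function.ne_iff.mp hN
  exact Pi.lt_def.mpr ⟨hle, v, by simpa using Submodule.finrank_lt hv⟩

theorem exists_iso_prod {d : V → ℕ} (φ : QuiverRep K s t (coordSpace K d))
    (hφ : ¬ φ.HasTrivialIdempotents) :
    ∃ d₁ < d, ∃ d₂ < d, ∃ (φ₁ : QuiverRep K s t (coordSpace K d₁))
      (φ₂ : QuiverRep K s t (coordSpace K d₂)), φ.Iso (φ₁.prod φ₂) := by
  simp only [HasTrivialIdempotents, not_forall, not_or] at hφ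
  obtain ⟨f, hf, hff, hf₀, hf₁⟩ := hφ
  have hidem (v : V) : IsIdempotentElem (f v) := congr_fun hff v
  have hrange : (fun v => LinearMap.range (f v)) ≠ ⊤ := fun h => hf₁ <| funext fun v =>
    LinearMap.ext fun w => (LinearMap.IsIdempotentElem.mem_range_iff (hidem v)).mp
      (show w ∈ LinearMap.range (f v) from congr_fun h v ▸ Submodule.mem_top)
  have hker : (fun v => LinearMap.ker (f v)) ≠ ⊤ := fun h => hf₀ <| funext fun v =>
    LinearMap.ker_eq_top.mp (congr_fun h v)
  obtain ⟨φ₁, h₁⟩ := exists_iso_coordSpace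
    (φ.restrict (fun v => LinearMap.range (f v)) hf.map_mem_range)
  obtain ⟨φ₂, h₂⟩ := exists_iso_coordSpace
    (φ.restrict (fun v => LinearMap.ker (f v)) hf.map_mem_ker)
  exact ⟨_, finrank_submodule_lt hrange, _, finrank_submodule_lt hker, φ₁, φ₂,
    (φ.iso_prod_restrict _ _ fun v =>
      LinearMap.IsIdempotentElem.isCompl (hidem v)).trans (h₁.prod h₂)⟩

theorem finite_isoClasses [Finite V]
    (h : ∀ d : V → ℕ, (Quotient.mk (isoSetoid K s t (coordSpace K d)) ''
      {φ | φ.HasTrivialIdempotents}).Finite) (d : V → ℕ) :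
    Finite (Quotient (isoSetoid K s t (coordSpace K d))) := by
  induction d using WellFoundedLT.induction with
  | ind d ih =>
    have : Finite (Set.Iio d) := by
      classical
      have := Fintype.ofFinite V
      exact (Set.finite_Iio d).to_subtype
    have (a : Set.Iio d) : Finite (Quotient (isoSetoid K s t (coordSpace K a.1))) := ih a.1 a.2
    have hsplit : (Quotient.mk (isoSetoid K s t (coordSpace K d)) ''
        {φ | ¬ φ.HasTrivialIdempotents}).Finite := by
      refine finite_image_mk_of_subset_iUnion _
        (fun a : (a : Set.Iio d) × (b : Set.Iio d) ×
            Quotient (isoSetoid K s t (coordSpace K a.1)) ×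
            Quotient (isoSetoid K s t (coordSpace K b.1)) =>
          {φ | φ.Iso (a.2.2.1.out.prod a.2.2.2.out)})
        (fun a φ hφ ψ hψ => hφ.trans hψ.symm) fun φ hφ => ?_
      obtain ⟨d₁, h₁, d₂, h₂, φ₁, φ₂, hiso⟩ := φ.exists_iso_prod hφ
      exact Set.mem_iUnion.mpr ⟨⟨⟨d₁, h₁⟩, ⟨d₂, h₂⟩, Quotient.mk _ φ₁, Quotient.mk _ φ₂⟩,
        hiso.trans (φ₁.out_mk_iso.symm.prod φ₂.out_mk_iso.symm)⟩
    refine Set.finite_univ_iff.mp (((h d).union hsplit).subset fun q _ => ?_)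
    induction q using Quotient.inductionOn with
    | h φ =>
      rw [← Set.image_union, Set.union_def]
      exact ⟨φ, em _, rfl⟩

end KrullSchmidt

section Total

variable {K : Type*} [CommRing K] {V A : Type*} {s t : A → V} [DecidableEq V]
  {W : V → Type*} [∀ v, AddCommGroup (W v)] [∀ v, Module K (W v)]
  {W₁ : V → Type*} [∀ v, AddCommGroup (W₁ v)] [∀ v, Module K (W₁ v)]
  {W₂ : V → Type*} [∀ v, AddCommGroup (W₂ v)] [∀ v, Module K (W₂ v)]
  {W₃ : V → Type*} [∀ v, AddCommGroup (W₃ v)] [∀ v, Module K (W₃ v)]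

/-- The action of the arrow `e` on the total space of a representation. -/
def total (φ : QuiverRep K s t W) (e : A) : Module.End K (∀ v, W v) :=
  LinearMap.single K W (t e) ∘ₗ φ.map e ∘ₗ LinearMap.proj (s e)

theorem total_apply (φ : QuiverRep K s t W) (e : A) (m : ∀ v, W v) :
    φ.total e m = Pi.single (t e) (φ.map e (m (s e))) := rfl

theorem total_single_of_ne (φ : QuiverRep K s t W) {e : A} {v : V} (h : s e ≠ v) (w : W v) :
    φ.total e (Pi.single v w) = 0 := by
  rw [total_apply, Pi.single_eq_of_ne h, map_zero, Pi.single_zero]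

/-- The block with row `v` and column `u` of a linear map between total spaces. -/
def block (f : (∀ v, W₁ v) →ₗ[K] ∀ v, W₂ v) (v u : V) : W₁ u →ₗ[K] W₂ v :=
  LinearMap.proj v ∘ₗ f ∘ₗ LinearMap.single K W₁ u

theorem block_apply (f : (∀ v, W₁ v) →ₗ[K] ∀ v, W₂ v) (v u : V) (w : W₁ u) :
    block f v u w = f (Pi.single u w) v := rfl

theorem block_id (v : V) : block (LinearMap.id : Module.End K (∀ v, W v)) v v = LinearMap.id :=
  LinearMap.ext fun w => Pi.single_eq_same v w

theorem block_comp [Fintype V] (h : (∀ v, W₂ v) →ₗ[K] ∀ v, W₃ v)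
    (f : (∀ v, W₁ v) →ₗ[K] ∀ v, W₂ v) (v u : V) :
    block (h ∘ₗ f) v u = ∑ x, block h v x ∘ₗ block f x u := by
  ext w
  simp only [block_apply, LinearMap.sum_apply, LinearMap.comp_apply]
  rw [← Finset.sum_apply, ← map_sum, Finset.univ_sum_single]

/-- `f` commutes with the actions of all arrows on the total spaces, but need not respect their
decompositions. -/
def Intertwines (φ : QuiverRep K s t W₁) (ψ : QuiverRep K s t W₂)
    (f : (∀ v, W₁ v) →ₗ[K] ∀ v, W₂ v) : Prop :=
  ∀ e m, f (φ.total e m) = ψ.total e (f m)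

variable {φ : QuiverRep K s t W₁} {ψ : QuiverRep K s t W₂}
  {f : (∀ v, W₁ v) →ₗ[K] ∀ v, W₂ v} {h : (∀ v, W₂ v) →ₗ[K] ∀ v, W₁ v}

theorem Intertwines.isHom_diag (hf : φ.Intertwines ψ f) : φ.IsHom ψ fun v => block f v v := by
  intro e
  ext w
  have key := congr_fun (hf e (Pi.single (s e) w)) (t e)
  simpa only [total_apply, Pi.single_eq_same, LinearMap.comp_apply, block_apply] using key

theorem Intertwines.total_block_of_ne (hf : φ.Intertwines ψ f) {v u : V} (hvu : u ≠ v)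
    (w : W₁ u) (e : A) : ψ.total e (Pi.single v (block f v u w)) = 0 := by
  obtain rfl | hv := eq_or_ne (s e) v
  · calc ψ.total e (Pi.single (s e) (block f (s e) u w))
        = ψ.total e (f (Pi.single u w)) := by
          simp only [total_apply, Pi.single_eq_same, block_apply]
      _ = 0 := by rw [← hf, total_single_of_ne φ hvu.symm, map_zero]
  · exact ψ.total_single_of_ne hv _

theorem Intertwines.block_total_of_ne (hf : φ.Intertwines ψ f) {v u : V} (huv : u ≠ v)
    (e : A) (m : ∀ v, W₁ v) : block f u v (φ.total e m v) = 0 := by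
  obtain rfl | hv := eq_or_ne v (t e)
  · calc block f u (t e) (φ.total e m (t e))
        = f (φ.total e m) u := by simp only [total_apply, Pi.single_eq_same, block_apply]
      _ = 0 := by rw [hf, total_apply, Pi.single_eq_of_ne huv]
  · rw [total_apply, Pi.single_eq_of_ne hv, map_zero]

/-- At every vertex, the outgoing arrows are jointly injective or the incoming ones are jointly
surjective. For a bipartite quiver this says that there is no simple direct summand. -/
def Nondegenerate (φ : QuiverRep K s t W) : Prop :=
  ∀ v, (∀ w, (∀ e, φ.total e (Pi.single v w) = 0) → w = 0) ∨
    ⨆ e, LinearMap.range (LinearMap.proj v ∘ₗ φ.total e) = ⊤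

theorem Nondegenerate.block_eq_zero (hφ : φ.Nondegenerate) (hf : φ.Intertwines ψ f)
    (hh : ψ.Intertwines φ h) (v : V) :
    (∀ u ≠ v, block h v u = 0) ∨ ∀ u ≠ v, block f u v = 0 := by
  refine (hφ v).imp (fun hinj u hu => ?_) fun hsurj u hu => ?_
  · exact LinearMap.ext fun w => hinj _ (hh.total_block_of_ne hu w)
  · refine LinearMap.ker_eq_top.mp (top_le_iff.mp (hsurj ▸ iSup_le fun e => ?_))
    rintro _ ⟨m, rfl⟩
    exact hf.block_total_of_ne hu e m

theorem Nondegenerate.block_comp_diag [Finite V] (hφ : φ.Nondegenerate)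
    (hf : φ.Intertwines ψ f) (hh : ψ.Intertwines φ h) (v : V) :
    block (h ∘ₗ f) v v = block h v v ∘ₗ block f v v := by
  have := Fintype.ofFinite V
  rw [block_comp, Finset.sum_eq_single_of_mem v (Finset.mem_univ v)]
  intro u _ hu
  obtain h₀ | h₀ := hφ.block_eq_zero hf hh v
  · rw [h₀ u hu, LinearMap.zero_comp]
  · rw [h₀ u hu, LinearMap.comp_zero]

theorem Nondegenerate.iso_of_intertwines [Finite V] (hφ : φ.Nondegenerate)
    (hψ : ψ.Nondegenerate) (P : (∀ v, W₁ v) ≃ₗ[K] ∀ v, W₂ v)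
    (hP : φ.Intertwines ψ P.toLinearMap) : φ.Iso ψ := by
  have hP' : ψ.Intertwines φ P.symm.toLinearMap := fun e m => by
    rw [LinearEquiv.coe_coe, LinearEquiv.symm_apply_eq, ← LinearEquiv.coe_coe P, hP]
    simp
  refine ⟨fun v => .ofLinearMap (block P.toLinearMap v v) (block P.symm.toLinearMap v v) ?_ ?_,
    hP.isHom_diag⟩
  · rw [← hψ.block_comp_diag hP' hP, LinearEquiv.comp_symm, block_id]
  · rw [← hφ.block_comp_diag hP hP', LinearEquiv.symm_comp, block_id]

theorem Nondegenerate.eq_zero_of_diag_eq_zero [Finite V] {φ : QuiverRep K s t W}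
    (hφ : φ.Nondegenerate) {f : Module.End K (∀ v, W v)} (hf : φ.Intertwines φ f)
    (hff : IsIdempotentElem f) (hdiag : ∀ v, block f v v = 0) : f = 0 := by
  have := Fintype.ofFinite V
  have hmul (u x v : V) : block f u x ∘ₗ block f x v = 0 := by
    obtain h₀ | h₀ := hφ.block_eq_zero hf hf x
    · rw [show block f x v = 0 from (eq_or_ne v x).elim (fun h => h ▸ hdiag v) (h₀ v),
        LinearMap.comp_zero]
    · rw [show block f u x = 0 from (eq_or_ne u x).elim (fun h => h ▸ hdiag u) (h₀ u),
        LinearMap.zero_comp]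
  have hblock (u v : V) : block f u v = 0 := by
    rw [← hff.eq, Module.End.mul_eq_comp, block_comp]
    exact Finset.sum_eq_zero fun x _ => hmul u x v
  exact LinearMap.pi_ext fun v w => funext fun u => LinearMap.congr_fun (hblock u v) w

theorem Nondegenerate.eq_zero_or_eq_one [Finite V] {φ : QuiverRep K s t W}
    (hφ : φ.Nondegenerate) (hφ' : φ.HasTrivialIdempotents) {f : Module.End K (∀ v, W v)}
    (hf : φ.Intertwines φ f) (hff : IsIdempotentElem f) : f = 0 ∨ f = 1 := by
  have hdiag : IsIdempotentElem fun v => block f v v := funext fun v => by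
    rw [Pi.mul_apply, Module.End.mul_eq_comp, ← hφ.block_comp_diag hf hf,
      ← Module.End.mul_eq_comp, hff.eq]
  refine (hφ' _ hf.isHom_diag hdiag).imp (fun h₀ => ?_) fun h₁ => ?_
  · exact hφ.eq_zero_of_diag_eq_zero hf hff (congr_fun h₀)
  · refine (sub_eq_zero.mp ?_).symm
    refine hφ.eq_zero_of_diag_eq_zero (fun e m => ?_) hff.one_sub fun v => ?_
    · simp only [LinearMap.sub_apply, Module.End.one_apply, map_sub, hf e m]
    · calc block (1 - f) v v = block LinearMap.id v v - block f v v := rfl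
        _ = 0 := by rw [block_id, show block f v v = 1 from congr_fun h₁ v]; exact sub_self _

end Total

section Nondegenerate

variable {K : Type*} [Field K] {V A : Type*} {s t : A → V} [DecidableEq V]
  {W : V → Type*} [∀ v, AddCommGroup (W v)] [∀ v, Module K (W v)]

theorem isHom_single_smulRight {φ : QuiverRep K s t W} {v : V} {w₀ : W v}
    {ξ : Module.Dual K (W v)} (hw₀ : ∀ e, φ.total e (Pi.single v w₀) = 0)
    (hξ : ∀ e m, ξ (φ.total e m v) = 0) : φ.IsHom φ (Pi.single v (ξ.smulRight w₀)) := by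
  refine fun e => LinearMap.ext fun w => ?_
  have hleft : (Pi.single v (ξ.smulRight w₀) : ∀ v, Module.End K (W v)) (t e) (φ.map e w) = 0 := by
    obtain rfl | hv := eq_or_ne (t e) v
    · simpa [total_apply] using Or.inl (hξ e (Pi.single (s e) w))
    · rw [Pi.single_eq_of_ne hv, LinearMap.zero_apply]
  have hright : φ.map e ((Pi.single v (ξ.smulRight w₀) : ∀ v, Module.End K (W v)) (s e) w) = 0 := by
    obtain rfl | hv := eq_or_ne (s e) v
    · have hmap : φ.map e w₀ = 0 := by simpa [total_apply] using congr_fun (hw₀ e) (t e)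
      simp [hmap]
    · rw [Pi.single_eq_of_ne hv, LinearMap.zero_apply, map_zero]
  exact hleft.trans hright.symm

/-- The idempotent `w ↦ ξ w • w₀` at `v` splits off a simple summand, so it must be `1`. -/
theorem HasTrivialIdempotents.map_eq_zero {φ : QuiverRep K s t W} (hφ : φ.HasTrivialIdempotents)
    (hst : ∀ e, s e ≠ t e) {v : V} {w₀ : W v} {ξ : Module.Dual K (W v)} (hξw : ξ w₀ = 1)
    (hw₀ : ∀ e, φ.total e (Pi.single v w₀) = 0) (hξ : ∀ e m, ξ (φ.total e m v) = 0) :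
    φ.map = 0 := by
  have hidem : IsIdempotentElem
      (Pi.single v (ξ.smulRight w₀) : ∀ v, Module.End K (W v)) := by
    rw [IsIdempotentElem, ← Pi.single_mul]
    congr 1
    ext w
    simp [hξw]
  obtain h | h := hφ _ (isHom_single_smulRight hw₀ hξ) hidem
  · have hw := LinearMap.congr_fun (congr_fun h v) w₀
    simp only [Pi.single_eq_same, LinearMap.smulRight_apply, hξw, one_smul] at hw
    rw [show w₀ = 0 from hw, map_zero] at hξw
    exact absurd hξw zero_ne_one
  · have hsub {u : V} (hu : u ≠ v) (w : W u) : w = 0 := by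
      have hw := LinearMap.congr_fun (congr_fun h u) w
      rw [Pi.single_eq_of_ne hu] at hw
      exact hw.symm
    funext e
    ext w
    obtain hs | hs := ne_or_eq (s e) v
    · rw [hsub hs w, map_zero, map_zero]
    · exact hsub (hs ▸ (hst e).symm) _

theorem HasTrivialIdempotents.nondegenerate {φ : QuiverRep K s t W}
    (hφ : φ.HasTrivialIdempotents) (hφ₀ : φ.map ≠ 0) (hst : ∀ e e', s e ≠ t e') :
    φ.Nondegenerate := by
  intro v
  by_contra! hv
  obtain ⟨⟨w, hw, hw₀⟩, hrange⟩ := hv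
  by_cases hv : ∃ e, s e = v
  · obtain ⟨e, rfl⟩ := hv
    obtain ⟨ξ, hξ⟩ := Module.Projective.exists_dual_eq_one K hw₀
    refine hφ₀ (hφ.map_eq_zero (fun e => hst e e) hξ hw fun e' m => ?_)
    rw [total_apply, Pi.single_eq_of_ne (hst e e'), map_zero]
  · obtain ⟨ξ, hξ₀, hξ⟩ := Submodule.exists_le_ker_of_lt_top _ hrange.lt_top
    obtain ⟨w', hw'⟩ := LinearMap.surjective hξ₀ 1
    refine hφ₀ (hφ.map_eq_zero (fun e => hst e e) hw'
      (fun e => φ.total_single_of_ne (fun h => hv ⟨e, h⟩) w') fun e m => ?_)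
    exact hξ (Submodule.mem_iSup_of_mem e ⟨m, rfl⟩)

end Nondegenerate

section Polynomial

open MvPolynomial

theorem exists_ne_zero_aeval_eq_zero {K α β : Type*} [Field K] [Finite α] [Finite β]
    (h : Nat.card β < Nat.card α) (z : α → MvPolynomial β K) :
    ∃ p : MvPolynomial α K, p ≠ 0 ∧ aeval z p = 0 := by
  by_contra! hz
  have hind : AlgebraicIndependent K z := (injective_iff_map_eq_zero _).mpr fun p hp => by
    by_contra hp₀
    exact hz p hp₀ hp
  have hle := hind.lift_cardinalMk_le_trdeg
  rw [MvPolynomial.trdeg_of_isDomain] at hle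
  have := Fintype.ofFinite α
  have := Fintype.ofFinite β
  simp only [Cardinal.mk_fintype, Cardinal.lift_natCast, Nat.cast_le,
    Nat.card_eq_fintype_card] at hle h
  omega

/-- The relations satisfied by the coordinates of the finitely many maps multiply to a nonzero
polynomial vanishing on all of their images. -/
theorem exists_eval_ne_zero_forall_eval_ne {K L α β : Type*} [Field K] [Infinite K] [Finite L]
    [Finite α] [Finite β] (h : Nat.card β < Nat.card α) (z : L → α → MvPolynomial β K)
    {q : MvPolynomial α K} (hq : q ≠ 0) :
    ∃ x : α → K, eval x q ≠ 0 ∧ ∀ l y, (fun a => eval y (z l a)) ≠ x := by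
  choose p hp₀ hp using fun l => exists_ne_zero_aeval_eq_zero h (z l)
  have := Fintype.ofFinite L
  have hprod : q * ∏ l, p l ≠ 0 := mul_ne_zero hq (Finset.prod_ne_zero_iff.mpr fun l _ => hp₀ l)
  obtain ⟨x, hx⟩ : ∃ x, eval x (q * ∏ l, p l) ≠ 0 := by
    by_contra! hx
    exact hprod (MvPolynomial.funext fun x => (hx x).trans (map_zero _).symm)
  rw [map_mul, map_prod] at hx
  refine ⟨x, left_ne_zero_of_mul hx, fun l y hy => ?_⟩
  refine Finset.prod_ne_zero_iff.mp (right_ne_zero_of_mul hx) l (Finset.mem_univ l) ?_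
  calc eval x (p l) = eval y (aeval (z l) (p l)) := by
        rw [← hy, ← aeval_eq_eval, ← aeval_eq_eval, ← bind₁, aeval_bind₁]
    _ = 0 := by rw [hp, map_zero]

end Polynomial

section MatrixFamily

variable {R S : Type*} [CommRing R] [CommRing S] {V : Type*} [Fintype V] [DecidableEq V]
  {n : V → Type*} [∀ v, Fintype (n v)] [∀ v, DecidableEq (n v)]

/-- The inverse of the matrix at `v`, multiplied by the determinants of all matrices of the family
so that its entries are polynomial in the entries of the family. -/
def scaledInv (P : ∀ v, Matrix (n v) (n v) R) (v : V) : Matrix (n v) (n v) R :=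
  (∏ u ∈ Finset.univ.erase v, (P u).det) • (P v).adjugate

theorem scaledInv_mul (P : ∀ v, Matrix (n v) (n v) R) (v : V) :
    scaledInv P v * P v = (∏ u, (P u).det) • 1 := by
  rw [scaledInv, Matrix.smul_mul, Matrix.adjugate_mul, smul_smul,
    Finset.prod_erase_mul _ _ (Finset.mem_univ v)]

theorem scaledInv_map (f : R →+* S) (P : ∀ v, Matrix (n v) (n v) R) (v : V) :
    (scaledInv P v).map f = scaledInv (fun v => (P v).map f) v := by
  have hadj : (P v).adjugate.map f = ((P v).map f).adjugate := f.map_adjugate (P v)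
  have hdet (u : V) : f (P u).det = ((P u).map f).det := f.map_det (P u)
  simp only [scaledInv, Matrix.map_smul' (f := f) _ _ (map_mul f), map_prod, hadj, hdet]

end MatrixFamily

section DimensionCount

open MvPolynomial

variable {K : Type*} [Field K] {V A : Type*} {s t : A → V} {d : V → ℕ}

/-- Entries of a family of square matrices indexed by the vertices. -/
abbrev VertexEntry (d : V → ℕ) : Type _ := Σ v, Fin (d v) × Fin (d v)

variable (s t d) in
/-- Entries of the matrices of a representation with dimension vector `d`. -/
abbrev ArrowEntry : Type _ := Σ e, Fin (d (t e)) × Fin (d (s e))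

/-- The matrix of an arrow in coordinates. -/
def matrix (φ : QuiverRep K s t (coordSpace K d)) (e : A) :
    Matrix (Fin (d (t e))) (Fin (d (s e))) K :=
  LinearMap.toMatrix' (φ.map e)

theorem Iso.exists_normalized {φ ψ : QuiverRep K s t (coordSpace K d)} (h : φ.Iso ψ)
    (hd : d ≠ 0) :
    ∃ (γ₀ : VertexEntry d) (P : ∀ v, Matrix (Fin (d v)) (Fin (d v)) K),
      P γ₀.1 γ₀.2.1 γ₀.2.2 = 1 ∧ (∀ v, (P v).det ≠ 0) ∧
      ∀ e, P (t e) * φ.matrix e = ψ.matrix e * P (s e) := by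
  obtain ⟨P, hP⟩ := h
  obtain ⟨v₀, hv₀⟩ := Function.ne_iff.mp hd
  let M (v : V) := LinearMap.toMatrix' (P v).toLinearMap
  have hM (v : V) : IsUnit (M v) := LinearMap.isUnit_toMatrix'_iff.mpr
    ((Module.End.isUnit_iff _).mpr (P v).bijective)
  obtain ⟨i, j, hij⟩ : ∃ i j, M v₀ i j ≠ 0 := by
    by_contra! h₀
    have : Nonempty (Fin (d v₀)) := ⟨⟨0, Nat.pos_of_ne_zero hv₀⟩⟩
    exact (hM v₀).ne_zero (Matrix.ext h₀)
  refine ⟨⟨v₀, i, j⟩, fun v => (M v₀ i j)⁻¹ • M v, inv_mul_cancel₀ hij, fun v => ?_, fun e => ?_⟩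
  · rw [Matrix.det_smul]
    exact mul_ne_zero (pow_ne_zero _ (inv_ne_zero hij)) ((hM v).map Matrix.detMonoidHom).ne_zero
  · rw [Matrix.smul_mul, Matrix.mul_smul, matrix, matrix, ← LinearMap.toMatrix'_comp,
      ← LinearMap.toMatrix'_comp, hP e]

section Cone

variable [DecidableEq V]

variable (K) in
/-- The generic family of square matrices whose entry at `γ₀` is normalised to `1`. -/
noncomputable def genericMatrix (γ₀ : VertexEntry d) (v : V) :
    Matrix (Fin (d v)) (Fin (d v)) (MvPolynomial (VertexEntry d) K) :=
  .of fun i j => if ⟨v, i, j⟩ = γ₀ then 1 else X ⟨v, i, j⟩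

/-- Polynomial parametrisation of the cone over the isomorphism class of `ψ`: the first coordinate
is the scale, and the others are the entries of the matrices of a conjugate of `ψ`, multiplied by
the scale. As the entry at `γ₀` of the conjugating family is `1`, its variable is free to
parametrise the scale. -/
noncomputable def conePoint [Fintype V] (ψ : QuiverRep K s t (coordSpace K d))
    (γ₀ : VertexEntry d) : Option (ArrowEntry s t d) → MvPolynomial (VertexEntry d) K
  | none => X γ₀ * ∏ v, (genericMatrix K γ₀ v).det
  | some ⟨e, i, j⟩ => X γ₀ * (scaledInv (genericMatrix K γ₀) (t e) *
      (ψ.matrix e).map (C (σ := VertexEntry d)) * genericMatrix K γ₀ (s e)) i j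

theorem genericMatrix_map_eval {γ₀ : VertexEntry d} {P : ∀ v, Matrix (Fin (d v)) (Fin (d v)) K}
    (hP : P γ₀.1 γ₀.2.1 γ₀.2.2 = 1) (c : K) (v : V) :
    (genericMatrix K γ₀ v).map (eval (Function.update (fun γ => P γ.1 γ.2.1 γ.2.2) γ₀ c)) =
      P v := by
  ext i j
  obtain rfl | h := eq_or_ne ⟨v, i, j⟩ γ₀
  · simp [genericMatrix, hP]
  · simp [genericMatrix, h]

theorem Iso.exists_eval_conePoint [Fintype V] {φ ψ : QuiverRep K s t (coordSpace K d)} (h : φ.Iso ψ)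
    (hd : d ≠ 0) (c : K) : ∃ γ₀ y, eval y (conePoint ψ γ₀ none) = c ∧
      ∀ e i j, eval y (conePoint ψ γ₀ (some ⟨e, i, j⟩)) =
        c * φ.matrix e i j := by
  obtain ⟨γ₀, P, hP₁, hdet, hP⟩ := h.exists_normalized hd
  have hD : ∏ v, (P v).det ≠ 0 := Finset.prod_ne_zero_iff.mpr fun v _ => hdet v
  let y := Function.update (fun γ : VertexEntry d => P γ.1 γ.2.1 γ.2.2) γ₀ (c / ∏ v, (P v).det)
  refine ⟨γ₀, y, ?_, fun e i j => ?_⟩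
  · have hgen (v : V) : eval y (genericMatrix K γ₀ v).det = (P v).det := by
      rw [RingHom.map_det, RingHom.mapMatrix_apply, genericMatrix_map_eval hP₁]
    rw [conePoint, map_mul, map_prod, eval_X, Finset.prod_congr rfl fun v _ => hgen v]
    simp [y, hD]
  · have hconj : scaledInv P (t e) * ψ.matrix e * P (s e) =
        (∏ v, (P v).det) • φ.matrix e := by
      rw [Matrix.mul_assoc, ← hP, ← Matrix.mul_assoc, scaledInv_mul, Matrix.smul_mul,
        Matrix.one_mul]
    have hgen : (scaledInv (genericMatrix K γ₀) (t e) * (ψ.matrix e).map (C (σ := VertexEntry d)) *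
        genericMatrix K γ₀ (s e)).map (eval y) = scaledInv P (t e) * ψ.matrix e * P (s e) := by
      have hC : ((ψ.matrix e).map (C (σ := VertexEntry d))).map (eval y) = ψ.matrix e := by
        ext
        simp
      simp only [Matrix.map_mul, scaledInv_map, hC, y, genericMatrix_map_eval hP₁]
    calc eval y (conePoint ψ γ₀ (some ⟨e, i, j⟩))
        = y γ₀ * (scaledInv P (t e) * ψ.matrix e * P (s e)) i j := by
          rw [← hgen, conePoint, map_mul, eval_X, Matrix.map_apply]
      _ = c * φ.matrix e i j := by
          rw [hconj, Matrix.smul_apply]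
          simp [y, ← mul_assoc, hD]

end Cone

theorem infinite_isoClasses [Infinite K] [Fintype V] [Fintype A] (hd : d ≠ 0)
    (hle : ∑ v, d v ^ 2 ≤ ∑ e, d (s e) * d (t e)) :
    Infinite (Quotient (isoSetoid K s t (coordSpace K d))) := by
  classical
  refine not_finite_iff_infinite.mp fun hfin => ?_
  have hcard : Nat.card (VertexEntry d) < Nat.card (Option (ArrowEntry s t d)) := by
    simpa [Nat.lt_succ_iff, sq, mul_comm] using hle
  obtain ⟨x, hx₀, hx⟩ := exists_eval_ne_zero_forall_eval_ne hcard
    (fun l : Quotient (isoSetoid K s t (coordSpace K d)) × VertexEntry d => conePoint l.1.out l.2)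
    (X_ne_zero none)
  rw [eval_X] at hx₀
  let φ : QuiverRep K s t (coordSpace K d) :=
    ⟨fun e => Matrix.toLin' (.of fun i j => x (some ⟨e, i, j⟩) / x none)⟩
  obtain ⟨γ₀, y, hy₀, hy⟩ := φ.out_mk_iso.symm.exists_eval_conePoint hd (x none)
  refine hx ⟨Quotient.mk _ φ, γ₀⟩ y (funext fun a => ?_)
  rcases a with _ | ⟨e, i, j⟩
  · exact hy₀
  · rw [hy]
    simp [φ, matrix, mul_div_cancel₀ _ hx₀]

end DimensionCount

section Realization

/-- A realisation in the coalgebra `C` of a quiver without paths of length two: grouplike elements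
at the vertices, skew primitive elements at the arrows, and functionals separating the latter from
each other and from the former. The arrows are reversed because a right comodule turns an element
of `P(g, h)` into a linear map from the `h`-component to the `g`-component. -/
structure Realization (K : Type) [CommRing K] (C : Type) [AddCommGroup C] [Module K C]
    [Coalgebra K C] {V A : Type*} (s t : A → V) where
  vertex : V → C
  arrow : A → C
  dual : A → Module.Dual K C
  isGrouplike_vertex : ∀ v, IsGrouplike K C (vertex v)
  arrow_mem : ∀ e, arrow e ∈ skewPrim K C (vertex (t e)) (vertex (s e))
  dual_vertex : ∀ e v, dual e (vertex v) = 0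
  dual_arrow_self : ∀ e, dual e (arrow e) = 1
  dual_arrow_of_ne : ∀ e e', e' ≠ e → dual e (arrow e') = 0
  source_ne_target : ∀ e e', s e ≠ t e'

variable {K : Type} [CommRing K] {C : Type} [AddCommGroup C] [Module K C] [Coalgebra K C]

theorem single_mem_span_pi_basis {V : Type*} [Fintype V] [DecidableEq V]
    {W : V → Type*} [∀ v, AddCommGroup (W v)] [∀ v, Module K (W v)] {ι : V → Type*}
    (b : ∀ v, Module.Basis (ι v) K (W v)) (v : V) (w : W v) :
    Pi.single v w ∈ Submodule.span K (Pi.basis b '' {i | i.1 = v}) := by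
  suffices ⊤ ≤ (Submodule.span K (Pi.basis b '' {i | i.1 = v})).comap (LinearMap.single K W v) from
    this (Submodule.mem_top (x := w))
  rw [← (b v).span_eq, Submodule.span_le]
  rintro _ ⟨i, rfl⟩
  exact Submodule.subset_span ⟨⟨v, i⟩, rfl, Pi.basis_apply b ⟨v, i⟩⟩

namespace Realization

variable {V A : Type} [Fintype V] [DecidableEq V] [Fintype A] {s t : A → V}
  {W : V → Type} [∀ v, AddCommGroup (W v)] [∀ v, Module K (W v)]
  {W₁ : V → Type} [∀ v, AddCommGroup (W₁ v)] [∀ v, Module K (W₁ v)]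
  {W₂ : V → Type} [∀ v, AddCommGroup (W₂ v)] [∀ v, Module K (W₂ v)]
  (R : Realization K C s t)

/-- The coaction on the total space of a representation. -/
noncomputable def coaction (φ : QuiverRep K s t W) : (∀ v, W v) →ₗ[K] (∀ v, W v) ⊗[K] C :=
  ∑ v, (TensorProduct.mk K _ C).flip (R.vertex v) ∘ₗ LinearMap.single K W v ∘ₗ LinearMap.proj v +
    ∑ e, (TensorProduct.mk K _ C).flip (R.arrow e) ∘ₗ φ.total e

variable (φ : QuiverRep K s t W)

theorem coaction_apply (m : ∀ v, W v) :
    R.coaction φ m = ∑ v, Pi.single v (m v) ⊗ₜ R.vertex v + ∑ e, φ.total e m ⊗ₜ R.arrow e := by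
  simp [coaction]

theorem coaction_single (v : V) (w : W v) :
    R.coaction φ (Pi.single v w) =
      Pi.single v w ⊗ₜ R.vertex v + ∑ e, φ.total e (Pi.single v w) ⊗ₜ R.arrow e := by
  rw [coaction_apply, Finset.sum_eq_single v _ (by simp), Pi.single_eq_same]
  intro u _ hu
  rw [Pi.single_eq_of_ne hu, Pi.single_zero, zero_tmul]

theorem coaction_total (e : A) (m : ∀ v, W v) :
    R.coaction φ (φ.total e m) = φ.total e m ⊗ₜ R.vertex (t e) := by
  rw [total_apply, coaction_single, Finset.sum_eq_zero, add_zero]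
  intro e' _
  rw [φ.total_single_of_ne (R.source_ne_target e' e), zero_tmul]

/-- The comodule attached to a representation of the realised quiver. -/
noncomputable abbrev comod : Comod K C where
  carrier := ∀ v, W v
  ρ := R.coaction φ
  counit_comp m := by
    have hvertex (v : V) : Coalgebra.counit (R := K) (R.vertex v) = 1 := (R.isGrouplike_vertex v).1
    have harrow (e : A) : Coalgebra.counit (R := K) (R.arrow e) = 0 :=
      counit_eq_zero_of_mem_skewPrim (R.isGrouplike_vertex _) (R.isGrouplike_vertex _)
        (R.arrow_mem e)
    simp [coaction_apply, hvertex, harrow, Finset.univ_sum_single]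
  coassoc m := by
    have hvertex (v : V) : Coalgebra.comul (R := K) (R.vertex v) = R.vertex v ⊗ₜ R.vertex v :=
      (R.isGrouplike_vertex v).2
    have harrow (e : A) := (mem_skewPrim K C).mp (R.arrow_mem e)
    have hsource (e : A) : ∑ v, φ.total e (Pi.single v (m v)) ⊗ₜ[K] (R.arrow e ⊗ₜ[K] R.vertex v) =
        φ.total e m ⊗ₜ[K] (R.arrow e ⊗ₜ[K] R.vertex (s e)) := by
      rw [Finset.sum_eq_single (s e) _ (by simp)]
      · simp [total_apply]
      · intro v _ hv
        rw [φ.total_single_of_ne hv.symm, zero_tmul]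
    simp only [coaction_apply R φ m, map_add, map_sum, LinearMap.lTensor_tmul,
      LinearMap.rTensor_tmul, hvertex, harrow, coaction_single, coaction_total, add_tmul, sum_tmul,
      tmul_add, TensorProduct.assoc_tmul, Finset.sum_add_distrib]
    rw [Finset.sum_comm, Finset.sum_congr rfl fun e _ => hsource e]
    abel

theorem rid_lTensor_dual_coaction (e : A) (m : ∀ v, W v) :
    TensorProduct.rid K _ (LinearMap.lTensor _ (R.dual e) (R.coaction φ m)) = φ.total e m := by
  simp only [coaction_apply, map_add, map_sum, LinearMap.lTensor_tmul, TensorProduct.rid_tmul,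
    dual_vertex, zero_smul, Finset.sum_const_zero, zero_add]
  rw [Finset.sum_eq_single e _ (by simp), dual_arrow_self, one_smul]
  intro e' _ he'
  rw [R.dual_arrow_of_ne e e' he', zero_smul]

theorem intertwines {φ : QuiverRep K s t W₁} {ψ : QuiverRep K s t W₂}
    (f : ComodHom K C (R.comod φ) (R.comod ψ)) : φ.Intertwines ψ f.toLin := by
  have hnat (ξ : Module.Dual K C) (z : (∀ v, W₁ v) ⊗[K] C) :
      f.toLin (TensorProduct.rid K _ (LinearMap.lTensor _ ξ z)) =
        TensorProduct.rid K _ (LinearMap.lTensor _ ξ (LinearMap.rTensor C f.toLin z)) := by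
    induction z with
    | zero => simp
    | tmul m c => simp
    | add z z' hz hz' => simp only [map_add, hz, hz']
  intro e m
  rw [← R.rid_lTensor_dual_coaction ψ, ← R.rid_lTensor_dual_coaction φ, hnat]
  exact congrArg _ (congrArg _ (f.compat m).symm)

theorem iso_of_comodIso {φ : QuiverRep K s t W₁} {ψ : QuiverRep K s t W₂}
    (hφ : φ.Nondegenerate) (hψ : ψ.Nondegenerate) (h : ComodIso K C (R.comod φ) (R.comod ψ)) :
    φ.Iso ψ := by
  obtain ⟨f, hf⟩ := h
  exact hφ.iso_of_intertwines hψ (.ofBijective f.toLin hf) (R.intertwines f)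

theorem indec_comod {φ : QuiverRep K s t W} (hφ : φ.Nondegenerate)
    (hφ' : φ.HasTrivialIdempotents) (hφ₀ : φ.map ≠ 0) : (R.comod φ).Indec K C := by
  refine ⟨?_, fun f hff => hφ.eq_zero_or_eq_one hφ' (R.intertwines f) hff⟩
  by_contra! hzero
  refine hφ₀ (funext fun e => LinearMap.ext fun w => ?_)
  exact (Pi.single_eq_same (t e) (φ.map e w)).symm.trans
    (congr_fun (hzero (Pi.single (t e) (φ.map e w))) (t e))

theorem hasDimVector_comod [Nontrivial K] (φ : QuiverRep K s t W) {ι : V → Type*}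
    [∀ v, Finite (ι v)] (b : ∀ v, Module.Basis (ι v) K (W v)) :
    HasDimVector K C (R.comod φ) fun h => Nat.card {i : Σ v, ι v // R.vertex i.1 = h} := by
  classical
  -- Arrows start at vertices of rank `1` and, there being no paths of length two, end at rank `0`.
  let r (i : Σ v, ι v) : ℕ := if ∃ e, s e = i.1 then 1 else 0
  refine hasDimVector_of_basis (M := R.comod φ) (Pi.basis b) r
    (fun i => R.isGrouplike_vertex i.1) fun ⟨v, i⟩ => ?_
  rw [Pi.basis_apply, coaction_single, add_sub_cancel_left]
  refine sum_mem fun e _ => ?_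
  obtain rfl | hv := eq_or_ne (s e) v
  · refine tmul_mem_range_rTensor_subtype ?_ _
    rw [total_apply]
    refine Submodule.span_mono (Set.image_mono fun j hj => ?_) (single_mem_span_pi_basis b _ _)
    have hsource : ¬ ∃ e', s e' = t e := fun ⟨e', he'⟩ => R.source_ne_target e' e he'
    have hj' : j.1 = t e := hj
    change r j < r ⟨s e, i⟩
    simp [r, hj', hsource]
  · rw [φ.total_single_of_ne hv, zero_tmul]
    exact zero_mem _

end Realization

end Realization

section Finiteness

variable {K : Type} [Field K] {C : Type} [AddCommGroup C] [Module K C] [Coalgebra K C]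
  {V A : Type} {s t : A → V}

theorem Realization.finite_image_mk_hasTrivialIdempotents [Finite V] [Finite A]
    (R : Realization K C s t) (hC : DiscreteCorepType K C) (d : V → ℕ) :
    (Quotient.mk (isoSetoid K s t (coordSpace K d)) '' {φ | φ.HasTrivialIdempotents}).Finite := by
  classical
  have := Fintype.ofFinite V
  have := Fintype.ofFinite A
  obtain ⟨N, M, hM⟩ := hC fun h => Nat.card {i : Σ v, Fin (d v) // R.vertex i.1 = h}
  refine finite_image_mk_of_subset_iUnion _
    (fun i : Option (Fin N) => i.elim {φ | φ.map = 0}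
      fun i => {φ | φ.Nondegenerate ∧ ComodIso K C (R.comod φ) (M i)}) ?_ fun φ hφ => ?_
  · rintro (_ | i) φ hφ ψ hψ
    · exact QuiverRep.ext (hφ.trans hψ.symm) ▸ Iso.refl φ
    · exact R.iso_of_comodIso hφ.1 hψ.1 (hφ.2.trans hψ.2.symm)
  · rw [Set.mem_iUnion]
    by_cases hφ₀ : φ.map = 0
    · exact ⟨none, hφ₀⟩
    · have hnondeg := hφ.nondegenerate hφ₀ R.source_ne_target
      obtain ⟨i, hi⟩ := hM (R.comod φ) (R.indec_comod hnondeg hφ hφ₀)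
        (R.hasDimVector_comod φ fun v => Pi.basisFun K (Fin (d v)))
      exact ⟨some i, hnondeg, hi⟩

theorem Realization.not_discreteCorepType [Infinite K] [Fintype V] [Fintype A]
    (R : Realization K C s t) {d : V → ℕ} (hd : d ≠ 0)
    (hle : ∑ v, d v ^ 2 ≤ ∑ e, d (s e) * d (t e)) : ¬ DiscreteCorepType K C :=
  fun hC => (infinite_isoClasses (K := K) hd hle).not_finite
    (finite_isoClasses (R.finite_image_mk_hasTrivialIdempotents hC) d)

end Finiteness

end QuiverRep

theorem exists_dual_of_linearIndependent {K ι M : Type*} [Field K] [AddCommGroup M] [Module K M]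
    {v : ι → M} (hv : LinearIndependent K v) (i : ι) :
    ∃ ξ : Module.Dual K M, ξ (v i) = 1 ∧ ∀ j ≠ i, ξ (v j) = 0 := by
  obtain ⟨ξ, hξ⟩ := LinearMap.exists_extend (Finsupp.lapply i ∘ₗ hv.repr)
  have key (j : ι) : ξ (v j) = Finsupp.single j 1 i := by
    have h := LinearMap.congr_fun hξ ⟨v j, Submodule.subset_span ⟨j, rfl⟩⟩
    simpa [hv.repr_eq_single j] using h
  exact ⟨ξ, by simp [key], fun j hj => by simp [key, hj]⟩

theorem sum_sq_natAbs_le {V A : Type*} [Fintype V] [Fintype A] {s t : A → V} {d : V → ℤ}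
    (h : ∑ v, d v ^ 2 ≤ ∑ e, d (s e) * d (t e)) :
    ∑ v, (d v).natAbs ^ 2 ≤ ∑ e, (d (t e)).natAbs * (d (s e)).natAbs := by
  zify
  calc ∑ v, |d v| ^ 2 = ∑ v, d v ^ 2 := by simp only [sq_abs]
    _ ≤ ∑ e, d (s e) * d (t e) := h
    _ ≤ ∑ e, |d (t e)| * |d (s e)| := Finset.sum_le_sum fun e _ => by
        rw [← abs_mul, mul_comm]
        exact le_abs_self _

theorem not_discrete_of_quotient_of_bipartite_nonDynkin_general
    {K : Type} [Field K] [Infinite K]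
    {C : Type} [AddCommGroup C] [Module K C] [Coalgebra K C]
    {V' A' : Type} {s' t' : A' → V'} {g : V' → C} {x : A' → C}
    (hgl : ∀ v, IsGrouplike K C (g v))
    (hx : ∀ e, x e ∈ skewPrim K C (g (s' e)) (g (t' e)))
    (hind : LinearIndependent K (Sum.elim g x))
    {V A : Type} [Fintype V] [Fintype A] {s t : A → V}
    (hbip : ∀ v : V, (∀ e, s e ≠ v) ∨ (∀ e, t e ≠ v))
    (hnondynkin : ∃ d : V → ℤ, d ≠ 0 ∧ ∑ v, (d v) ^ 2 ≤ ∑ e, d (s e) * d (t e))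
    {p : V → V'} {F : A → A'} (hF : Function.Injective F)
    (hqs : ∀ e, s' (F e) = p (s e)) (hqt : ∀ e, t' (F e) = p (t e)) :
    ¬ DiscreteCorepType K C := by
  classical
  obtain ⟨d, hd, hle⟩ := hnondynkin
  choose dual hself hne using exists_dual_of_linearIndependent hind
  let R : QuiverRep.Realization K C t s :=
    { vertex := g ∘ p
      arrow := x ∘ F
      dual := fun e => dual (.inr (F e))
      isGrouplike_vertex := fun v => hgl (p v)
      arrow_mem := fun e => by simpa only [Function.comp_apply, hqs, hqt] using hx (F e)
      dual_vertex := fun e v => hne _ (.inl (p v)) Sum.inl_ne_inr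
      dual_arrow_self := fun e => hself (.inr (F e))
      dual_arrow_of_ne := fun e e' h => hne _ (.inr (F e')) fun h' => h (hF (Sum.inr_injective h'))
      source_ne_target := fun e e' h => (hbip (s e')).elim (fun hs => hs e' rfl) fun ht => ht e h }
  have hd' : (fun v => (d v).natAbs) ≠ 0 := fun h =>
    hd (funext fun v => Int.natAbs_eq_zero.mp (congr_fun h v))
  exact R.not_discreteCorepType hd' (sum_sq_natAbs_le hle)

theorem not_discrete_of_quotient_of_bipartite_nonDynkin
    (K : Type) [Field K] [IsAlgClosed K]
    (C : Type) [AddCommGroup C] [Module K C] [Coalgebra K C]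
    (hpointed : IsPointedCoalgebra K C)
    -- `Q'` : a subquiver of the Ext-quiver of `C`, with distinct grouplike vertices `g v`
    -- and arrows realized by jointly linearly independent skew primitives `x e`
    (V' A' : Type) (s' t' : A' → V') (g : V' → C) (x : A' → C)
    (hg : Function.Injective g) (hgl : ∀ v, IsGrouplike K C (g v))
    (hx : ∀ e, x e ∈ skewPrim K C (g (s' e)) (g (t' e)))
    (hind : LinearIndependent K (Sum.elim g x))
    -- `Q` : a finite bipartite quiver whose underlying graph is not a disjoint union of
    -- Dynkin diagrams (equivalently, whose Tits form is not positive definite)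
    (V A : Type) [Fintype V] [Fintype A] (s t : A → V)
    (hbip : ∀ v : V, (∀ e, s e ≠ v) ∨ (∀ e, t e ≠ v))
    (hnondynkin : ∃ d : V → ℤ, d ≠ 0 ∧ ∑ v, (d v) ^ 2 ≤ ∑ e, d (s e) * d (t e))
    -- `q : Q → Q'` : a quotient-quiver homomorphism, gluing vertices and preserving arrows
    (p : V → V') (F : A → A')
    (hp : Function.Surjective p) (hF : Function.Bijective F)
    (hqs : ∀ e, s' (F e) = p (s e)) (hqt : ∀ e, t' (F e) = p (t e)) :
    ¬ DiscreteCorepType K C :=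
  not_discrete_of_quotient_of_bipartite_nonDynkin_general hgl hx hind hbip hnondynkin hF.injective
    hqs hqt
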